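/- Let 𝕂 be ℝ or ℂ and let s be a finite-dimensional Lie algebra over 𝕂 which is a semidirect sum s = r + u, where u is an abelian ideal of s, r is a semisimple Lie subalgebra of s with r ∩ u = 0 and r + u = s, and the space of r-invariants in u is zero (i.e., the only x ∈ u satisfying ⁅y, x⁆ = 0 for all y ∈ r is x = 0). Let γ be an element of the dual space s* that does not vanish identically on u. Then r·γ = {γ ∘ ad(x) : x ∈ r} is a proper subspace of s·γ = {γ ∘ ad(x) : x ∈ s}; in particular the subgroup corresponding to r cannot act infinitesimally transitively at γ on the coadjoint orbit of γ. -/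

import Mathlib

/-!
Put `μ = γ|_u` and `φ = γ|_r`. Evaluating `γ ∘ ad v` on `u` and on `r`, for `v ∈ u`, one sees that
`u·γ ⊆ r·γ` means: for every `v ∈ u` there is `y ∈ r` annihilating `μ` with
`φ ⁅y, x⁆ = μ ⁅x, v⁆` for all `x ∈ r`. It has to be shown that this forces `μ = 0`.

Let `B` be a nondegenerate invariant form on a Lie algebra acting on `u`, let `𝔥` be the stabilizer
of `μ`, and write `φ = B(e, ·)`. Then `e ∈ 𝔥`, as `μ ⁅e, v⁆ = B(e, ⁅y, e⁆) = 0`, so `μ ⁅·, v⁆` is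
`B`-dual to the commutator `⁅e, y⁆` of two elements of `𝔥`. For the Casimir operator `Ω` of `B`,
`μ (Ω v)` is the trace of the operator `D` with `B(D x, y) = μ ⁅y, ⁅x, v⁆⁆`. This operator maps
into `𝔥` and agrees on `𝔥` with `ad` of a commutator in `𝔥`; hence `μ ∘ Ω = 0`.

By Cartan's criterion `B` can be taken to be the trace form of `u` on a complement of the kernel of
the action, and then `Ω` has trace the dimension of this complement. As `μ` vanishes on the range of
every positive power of `Ω`, it is determined by its restriction to the Fitting null component of
`Ω`, a submodule, which is proper because the trace of `Ω` is not zero. Induction on the dimension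
concludes.
-/

open LieModule LieAlgebra Module

section CartanCriterion

lemma isNilpotent_ad_of_isNilpotent_toEnd {R L M : Type*} [CommRing R] [LieRing L]
    [LieAlgebra R L] [AddCommGroup M] [Module R M] [LieRingModule L M] [LieModule R L M]
    [IsFaithful R L M] {x : L} (hx : IsNilpotent (toEnd R L M x)) : IsNilpotent (ad R L x) := by
  let _ : LieRing (End R M) := LieRing.ofAssociativeRing
  obtain ⟨n, hn⟩ := ad_nilpotent_of_nilpotent (R := R) hx
  have hcomm : (ad R (End R M) (toEnd R L M x)).comp (toEnd R L M : L →ₗ[R] End R M) =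
      (toEnd R L M : L →ₗ[R] End R M).comp (ad R L x) := by
    ext1 y
    exact ((toEnd R L M).map_lie x y).symm
  have hpow := Module.End.commute_pow_left_of_commute hcomm n
  rw [hn, LinearMap.zero_comp] at hpow
  refine ⟨n, LinearMap.ext fun y ↦ (toEnd_eq_zero_iff R L M).1 ?_⟩
  exact (LinearMap.congr_fun hpow y).symm

variable (K L M : Type*) [Field K] [LieRing L] [LieAlgebra K L] [Module.Finite K L]
  [AddCommGroup M] [Module K M] [LieRingModule L M] [LieModule K L M]

lemma isNilpotent_of_isFaithful [IsFaithful K L M] [LieModule.IsNilpotent L M] :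
    LieRing.IsNilpotent L := by
  rw [LieAlgebra.isNilpotent_iff_forall (R := K)]
  intro x
  exact isNilpotent_ad_of_isNilpotent_toEnd (isNilpotent_toEnd_of_isNilpotent K L M x)

variable [CharZero K] [Module.Finite K M]

lemma isSolvable_of_isFaithful_of_traceForm_eq_zero [IsFaithful K L M]
    (h : traceForm K L M = 0) : IsSolvable L := by
  have : LieModule.IsNilpotent (derivedSeries K L 1) M :=
    isNilpotent_derivedSeries_of_traceForm_eq_zero h
  have : IsFaithful K (derivedSeries K L 1) M :=
    inferInstanceAs (IsFaithful K (derivedSeries K L 1 : LieSubalgebra K L) M)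
  have : LieRing.IsNilpotent (derivedSeries K L 1) := isNilpotent_of_isFaithful K _ M
  obtain ⟨k, hk⟩ := IsSolvable.solvable K (derivedSeries K L 1)
  rw [LieIdeal.derivedSeries_eq_bot_iff] at hk
  refine IsSolvable.mk (R := K) (k := k + 1) ?_
  rwa [derivedSeries_def, derivedSeriesOfIdeal_add]

lemma ker_traceForm [HasTrivialRadical K L] :
    LinearMap.ker (traceForm K L M) = (LieModule.ker K L M).toSubmodule := by
  let J : LieIdeal K L :=
    InvariantForm.orthogonal (traceForm K L M) (traceForm_lieInvariant K L M) ⊤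
  let I : LieIdeal K L := (LieModule.ker K L M).killingCompl
  have hI : IsCompl (LieModule.ker K L M) I := LieIdeal.isCompl_killingCompl _
  have hJ : J.toSubmodule = LinearMap.ker (traceForm K L M) := by
    ext x
    simp [J, LinearMap.ext_iff, traceForm_comm K L M x]
  have : IsFaithful K (J ⊓ I : LieIdeal K L) M := by
    refine (isFaithful_iff' ..).2 fun x hx ↦ Subtype.ext ?_
    have hx' : (x : L) ∈ LieModule.ker K L M ⊓ I := ⟨(LieModule.mem_ker ..).2 hx, x.2.2⟩
    rwa [hI.inf_eq_bot] at hx'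
  have : IsSolvable (J ⊓ I : LieIdeal K L) := by
    refine isSolvable_of_isFaithful_of_traceForm_eq_zero K _ M ?_
    ext x y
    exact y.2.1 x trivial
  have hJI : Disjoint J I := disjoint_iff.2 (HasTrivialRadical.eq_bot_of_isSolvable _)
  rw [← hJ]
  congr 1
  refine le_antisymm (hI.le_left_iff.2 hJI) fun x hx ↦ ?_
  have hx₀ : toEnd K L M x = 0 := LinearMap.ext ((LieModule.mem_ker K L M x).1 hx)
  have hx' : x ∈ J.toSubmodule := by
    rw [hJ, LinearMap.mem_ker]
    ext y
    simp [traceForm_apply_apply, hx₀]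
  exact hx'

lemma traceForm_nondegenerate_of_isCompl_ker [HasTrivialRadical K L] {I : LieIdeal K L}
    (hI : IsCompl (LieModule.ker K L M) I) : (traceForm K I M).Nondegenerate := by
  refine (traceForm_isSymm K L M).nondegenerate_restrict_of_isCompl_ker (W := I.toSubmodule) ?_
  rw [ker_traceForm]
  exact (LieSubmodule.isCompl_toSubmodule.2 hI).symm

end CartanCriterion

section Casimir

variable {K L : Type*} [Field K] [LieRing L] [LieAlgebra K L] [Module.Finite K L]
  {B : LinearMap.BilinForm K L} (hB : B.Nondegenerate)
  {M : Type*} [AddCommGroup M] [Module K M] [LieRingModule L M] [LieModule K L M]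

variable (M) in
/-- The Casimir operator of a nondegenerate bilinear form `B` on a Lie algebra `L`, acting on an
`L`-module: the sum of the `bᵢ bⁱ` for a basis `bᵢ` of `L`, here `finBasis K L`, and its `B`-dual
basis `bⁱ`. The form need not be symmetric; the convention is `B(bⁱ, bⱼ) = δᵢⱼ`. -/
noncomputable def casimir : End K M :=
  ∑ i, toEnd K L M (finBasis K L i) * toEnd K L M (B.dualBasis hB (finBasis K L) i)

/-- The operator `D` on `L` representing the second order matrix coefficient of an `L`-module at
`μ` and `v` through a nondegenerate form `B`, that is, `B(D x, y) = μ (y x v)`. It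
expresses the matrix coefficients of the Casimir operator of `B` as traces on `L`. -/
noncomputable def coeffOperator (μ : Dual K M) (v : M) : End K L :=
  (B.toDual hB).symm ∘ₗ (LinearMap.mk₂ K (fun x y : L ↦ μ ⁅y, ⁅x, v⁆⁆)
    (by simp) (by simp) (by simp) (by simp) : L →ₗ[K] Dual K L)

@[simp]
lemma apply_coeffOperator (μ : Dual K M) (v : M) (x y : L) :
    B (coeffOperator hB μ v x) y = μ ⁅y, ⁅x, v⁆⁆ :=
  LinearMap.BilinForm.apply_toDual_symm_apply (hB := hB) _ y

lemma apply_casimir (μ : Dual K M) (v : M) :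
    μ (casimir hB M v) = LinearMap.trace K L (coeffOperator hB μ v) := by
  let b := finBasis K L
  rw [LinearMap.trace_eq_matrix_trace K (B.dualBasis hB b), Matrix.trace]
  simp [casimir, b, LinearMap.toMatrix_apply, LinearMap.BilinForm.dualBasis_repr_apply,
    LinearMap.sum_apply]

lemma coeffOperator_lie (hinv : B.lieInvariant L) (μ : Dual K M) (x : L) (v : M) :
    coeffOperator hB μ ⁅x, v⁆ = coeffOperator hB (μ ∘ₗ toEnd K L M x) v +
      (ad K L x * coeffOperator hB μ v - coeffOperator hB μ v * ad K L x) := by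
  refine LinearMap.ext fun y ↦ sub_eq_zero.1 <| hB.1 _ fun z ↦ ?_
  simp [hinv x]

lemma commute_toEnd_casimir (hinv : B.lieInvariant L) (x : L) :
    Commute (toEnd K L M x) (casimir hB M) := by
  refine LinearMap.ext fun v ↦ (sub_eq_zero.1 <| (forall_dual_apply_eq_zero_iff K _).1 fun μ ↦ ?_)
  have h := apply_casimir hB μ ⁅x, v⁆
  -- The coefficient operators at `(μ, x v)` and at `(μ x, v)` differ by a commutator.
  rw [coeffOperator_lie hB hinv, map_add, map_sub, LinearMap.trace_mul_comm, sub_self, add_zero,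
    ← apply_casimir] at h
  simpa [sub_eq_zero] using h.symm

lemma trace_casimir_traceForm (hB : (traceForm K L M).Nondegenerate) :
    LinearMap.trace K M (casimir hB M) = finrank K L := by
  let b := finBasis K L
  have h (i) : LinearMap.trace K M
      (toEnd K L M (b i) * toEnd K L M ((traceForm K L M).dualBasis hB b i)) = 1 :=
    (LinearMap.BilinForm.apply_dualBasis_right hB ⟨traceForm_comm K L M⟩ b i i).trans (if_pos rfl)
  simp [casimir, map_sum, h, b]

lemma not_isNilpotent_casimir_traceForm [CharZero K] [Nontrivial L]
    (hB : (traceForm K L M).Nondegenerate) : ¬ IsNilpotent (casimir hB M) := fun h ↦ by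
  have htr := (LinearMap.isNilpotent_trace_of_isNilpotent h).eq_zero
  rw [trace_casimir_traceForm, Nat.cast_eq_zero] at htr
  exact finrank_pos.ne' htr

end Casimir

section KerComplement

variable {R L M : Type*} [CommRing R] [LieRing L] [LieAlgebra R L]
  [AddCommGroup M] [Module R M] [LieRingModule L M] [LieModule R L M]

lemma commute_toEnd_of_isCompl_ker {I : LieIdeal R L} (hI : IsCompl (LieModule.ker R L M) I)
    {Ω : End R M} (hΩ : ∀ x : I, Commute (toEnd R I M x) Ω) (x : L) :
    Commute (toEnd R L M x) Ω := by
  obtain ⟨a, ha, b, hb, rfl⟩ :=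
    (LieSubmodule.mem_sup _ _ x).1 (hI.sup_eq_top.ge (LieSubmodule.mem_top x))
  have ha₀ : toEnd R L M a = 0 := LinearMap.ext ((LieModule.mem_ker R L M a).1 ha)
  rw [map_add, ha₀, zero_add]
  exact hΩ ⟨b, hb⟩

lemma nontrivial_of_isCompl_ker [Nontrivial M] (hM : ∀ v : M, (∀ x : L, ⁅x, v⁆ = 0) → v = 0)
    {I : LieIdeal R L} (hI : IsCompl (LieModule.ker R L M) I) : Nontrivial I := by
  rw [LieSubmodule.nontrivial_iff_ne_bot]
  rintro rfl
  obtain ⟨v, hv⟩ := exists_ne (0 : M)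
  have hker : LieModule.ker R L M = ⊤ := eq_top_of_isCompl_bot hI
  exact hv (hM v fun x ↦ (LieModule.mem_ker R L M x).1 (hker ▸ LieSubmodule.mem_top x) v)

end KerComplement

section DualStabilizer

variable {R L M : Type*} [CommRing R] [LieRing L] [LieAlgebra R L]
  [AddCommGroup M] [Module R M] [LieRingModule L M] [LieModule R L M]

variable (L) in
/-- The stabilizer of a functional `μ` on an `L`-module under the dual action of `L`. -/
def dualStabilizer (μ : Dual R M) : LieSubalgebra R L where
  carrier := {y | ∀ v : M, μ ⁅y, v⁆ = 0}
  add_mem' hx hy v := by simp [hx v, hy v]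
  zero_mem' v := by simp
  smul_mem' c x hx v := by simp [hx v]
  lie_mem' hx hy v := by simp [lie_lie, hx ⁅_, v⁆, hy ⁅_, v⁆]

/-- The condition `M·(φ, μ) ⊆ L·(φ, μ)` on the coadjoint tangent directions at the functional
`(φ, μ)` on the semidirect sum of `L` and its module `M`, the latter being an abelian ideal. The two
components of the inclusion say that `y` stabilizes `μ` and that `φ ∘ ad y` is the translation
`x ↦ μ ⁅x, v⁆` of `φ`. -/
def AbsorbsTranslations (φ : Dual R L) (μ : Dual R M) : Prop :=
  ∀ v : M, ∃ y ∈ dualStabilizer L μ, ∀ x, φ ⁅y, x⁆ = μ ⁅x, v⁆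

namespace AbsorbsTranslations

variable {φ : Dual R L} {μ : Dual R M}

lemma restrict_submodule (h : AbsorbsTranslations φ μ) (N : LieSubmodule R L M) :
    AbsorbsTranslations φ (μ ∘ₗ N.toSubmodule.subtype : Dual R N) := fun v ↦ by
  obtain ⟨y, hy_mem, hy⟩ := h v
  exact ⟨y, fun w ↦ hy_mem w, hy⟩

lemma restrict_ideal (h : AbsorbsTranslations φ μ) {I : LieIdeal R L}
    (hI : IsCompl (LieModule.ker R L M) I) :
    AbsorbsTranslations (φ ∘ₗ I.toSubmodule.subtype : Dual R I) μ := fun v ↦ by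
  obtain ⟨y, hy_mem, hy⟩ := h v
  obtain ⟨a, ha, b, hb, rfl⟩ :=
    (LieSubmodule.mem_sup _ _ y).1 (hI.sup_eq_top.ge (LieSubmodule.mem_top y))
  refine ⟨⟨b, hb⟩, fun w ↦ ?_, fun x ↦ ?_⟩
  · simpa [(LieModule.mem_ker R L M a).1 ha w] using hy_mem w
  · have hax : ⁅a, (x : L)⁆ ∈ LieModule.ker R L M ⊓ I :=
      ⟨lie_mem_left R L _ a x ha, lie_mem_right R L I a x x.2⟩
    rw [hI.inf_eq_bot, LieSubmodule.mem_bot] at hax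
    change φ ⁅b, (x : L)⁆ = μ ⁅(x : L), v⁆
    rw [← hy x, add_lie, hax, zero_add]

end AbsorbsTranslations

end DualStabilizer

section Vanishing

variable {K L M : Type*} [Field K] [LieRing L] [LieAlgebra K L]
  [AddCommGroup M] [Module K M] [LieRingModule L M] [LieModule K L M]

/- Fitting's lemma: `μ` vanishes on the second summand of `M = ker Ω ^ k ⊕ range Ω ^ k`. -/
lemma exists_lieSubmodule_ne_top_restrict_ne_zero [Module.Finite K M] {Ω : End K M}
    (hΩ : ∀ x : L, Commute (toEnd K L M x) Ω) (hnil : ¬ IsNilpotent Ω) {μ : Dual K M}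
    (hμ : μ ≠ 0) (hμΩ : ∀ v, μ (Ω v) = 0) :
    ∃ N : LieSubmodule K L M, N ≠ ⊤ ∧ μ ∘ₗ N.toSubmodule.subtype ≠ 0 := by
  obtain ⟨k, hk, hk₀⟩ := (Ω.eventually_isCompl_ker_pow_range_pow.and
    (Filter.eventually_gt_atTop 0)).exists
  let N : LieSubmodule K L M :=
    { LinearMap.ker (Ω ^ k) with
      lie_mem {x v} hv := by
        have hcomm := LinearMap.congr_fun ((hΩ x).pow_right k).eq v
        exact hcomm.symm.trans ((congrArg _ hv).trans (lie_zero x)) }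
  refine ⟨N, fun hN ↦ hnil ⟨k, LinearMap.ker_eq_top.1 ?_⟩, fun hN ↦ hμ ?_⟩
  · exact congrArg LieSubmodule.toSubmodule hN
  · ext v
    obtain ⟨a, ha, -, ⟨w, rfl⟩, rfl⟩ := Submodule.mem_sup.1 (hk.sup_eq_top.ge (x := v) trivial)
    have hw : μ ((Ω ^ k) w) = 0 := by
      rw [← Nat.succ_pred_eq_of_pos hk₀, pow_succ', Module.End.mul_apply, hμΩ]
    rw [map_add, hw, add_zero]
    exact LinearMap.congr_fun hN ⟨a, ha⟩

lemma trace_eq_zero_of_eqOn_ad_lie [Module.Finite K L] (H : LieSubalgebra K L) {a b : L}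
    (ha : a ∈ H) (hb : b ∈ H) {D : End K L} (hD : ∀ x, D x ∈ H)
    (had : ∀ x ∈ H, D x = ⁅⁅a, b⁆, x⁆) : LinearMap.trace K L D = 0 := by
  rw [← LinearMap.trace_restrict_eq_of_forall_mem H.toSubmodule D hD]
  have hres : D.restrict (fun x _ ↦ hD x) = ad K H ⁅(⟨a, ha⟩ : H), ⟨b, hb⟩⁆ := by
    ext x
    exact had x x.2
  let _ : LieRing (End K H) := LieRing.ofAssociativeRing
  rw [hres, LieHom.map_lie]
  exact LinearMap.trace_lie ..

namespace AbsorbsTranslations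

variable {φ : Dual K L} {μ : Dual K M}

lemma apply_casimir_eq_zero [Module.Finite K L] {B : LinearMap.BilinForm K L}
    (h : AbsorbsTranslations φ μ) (hB : B.Nondegenerate) (hinv : B.lieInvariant L) (v : M) :
    μ (casimir hB M v) = 0 := by
  let e : L := (B.toDual hB).symm φ
  have he (x) : B e x = φ x := LinearMap.BilinForm.apply_toDual_symm_apply (hB := hB) φ x
  have he_mem : e ∈ dualStabilizer L μ := fun w ↦ by
    obtain ⟨y, -, hy⟩ := h w
    rw [← hy, ← he, ← lie_skew, map_neg, ← hinv, lie_self, map_zero, LinearMap.zero_apply]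
  have key {w : M} {y : L} (hy : ∀ x, φ ⁅y, x⁆ = μ ⁅x, w⁆) (x : L) : B ⁅e, y⁆ x = μ ⁅x, w⁆ := by
    rw [← lie_skew, map_neg, LinearMap.neg_apply, hinv, neg_neg, he, hy]
  have eq_of_forall {x x' : L} (hx : ∀ z, B x z = B x' z) : x = x' :=
    sub_eq_zero.1 <| hB.1 _ fun z ↦ by simp [hx]
  obtain ⟨y, hy_mem, hy⟩ := h v
  rw [apply_casimir]
  refine trace_eq_zero_of_eqOn_ad_lie (dualStabilizer L μ) hy_mem he_mem (fun x ↦ ?_)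
    fun x hx ↦ eq_of_forall fun z ↦ ?_
  · obtain ⟨y', hy'_mem, hy'⟩ := h ⁅x, v⁆
    have hDx : coeffOperator hB μ v x = ⁅e, y'⁆ := eq_of_forall fun z ↦ by
      rw [apply_coeffOperator, key hy']
    exact hDx ▸ LieSubalgebra.lie_mem _ he_mem hy'_mem
  · calc B (coeffOperator hB μ v x) z = μ ⁅z, ⁅x, v⁆⁆ := apply_coeffOperator ..
      _ = μ ⁅⁅z, x⁆, v⁆ := by rw [leibniz_lie, map_add, hx, add_zero]
      _ = B ⁅e, y⁆ ⁅z, x⁆ := (key hy _).symm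
      _ = B ⁅x, ⁅e, y⁆⁆ z := by rw [hinv x, ← map_neg, lie_skew]
      _ = B ⁅⁅y, e⁆, x⁆ z := by rw [← lie_skew x, ← lie_skew y, neg_lie]

variable [CharZero K] [Module.Finite K L] [HasTrivialRadical K L] [Module.Finite K M]

lemma exists_ne_top_restrict_ne_zero (h : AbsorbsTranslations φ μ)
    (hM : ∀ v : M, (∀ x : L, ⁅x, v⁆ = 0) → v = 0) (hμ : μ ≠ 0) :
    ∃ N : LieSubmodule K L M, N ≠ ⊤ ∧ μ ∘ₗ N.toSubmodule.subtype ≠ 0 := by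
  let I : LieIdeal K L := (LieModule.ker K L M).killingCompl
  have hI : IsCompl (LieModule.ker K L M) I := LieIdeal.isCompl_killingCompl _
  have hB : (traceForm K I M).Nondegenerate := traceForm_nondegenerate_of_isCompl_ker K L M hI
  have hinv := traceForm_lieInvariant K I M
  have : Nontrivial M := by
    by_contra! hM₀
    exact hμ (Subsingleton.elim _ _)
  have : Nontrivial I := nontrivial_of_isCompl_ker hM hI
  exact exists_lieSubmodule_ne_top_restrict_ne_zero
    (commute_toEnd_of_isCompl_ker hI (commute_toEnd_casimir hB hinv))
    (not_isNilpotent_casimir_traceForm hB) hμ ((h.restrict_ideal hI).apply_casimir_eq_zero hB hinv)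

lemma eq_zero (h : AbsorbsTranslations φ μ) (hM : ∀ v : M, (∀ x : L, ⁅x, v⁆ = 0) → v = 0) :
    μ = 0 := by
  induction hn : finrank K M using Nat.strong_induction_on generalizing M with
  | _ n ih =>
    by_contra hμ
    obtain ⟨N, hN, hμN⟩ := h.exists_ne_top_restrict_ne_zero hM hμ
    have hlt : finrank K N < n :=
      hn ▸ Submodule.finrank_lt (mt N.toSubmodule_eq_top.1 hN)
    refine hμN (ih (M := N) _ hlt (h.restrict_submodule N) (fun v hv ↦ ?_) rfl)
    exact Subtype.ext (hM v fun x ↦ congrArg Subtype.val (hv x))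

end AbsorbsTranslations

end Vanishing

section CoadjointTangent

variable {R s : Type*} [CommRing R] [LieRing s] [LieAlgebra R s]

lemma absorbsTranslations_of_forall_exists_ad_eq {r : LieSubalgebra R s} {u : LieIdeal R s}
    [IsLieAbelian u] {γ : Dual R s}
    (h : ∀ v ∈ u, ∃ y ∈ r, γ ∘ₗ (ad R s v : s →ₗ[R] s) = γ ∘ₗ (ad R s y : s →ₗ[R] s)) :
    AbsorbsTranslations (γ ∘ₗ r.toSubmodule.subtype : Dual R r)
      (γ ∘ₗ u.toSubmodule.subtype : Dual R u) := fun v ↦ by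
  obtain ⟨y, hy, hvy⟩ := h _ (-v).2
  replace hvy (w : s) : γ ⁅y, w⁆ = γ ⁅w, (v : s)⁆ := by
    rw [← lie_skew w, ← neg_lie]
    exact (LinearMap.congr_fun hvy w).symm
  refine ⟨⟨y, hy⟩, fun w ↦ (hvy w).trans ?_, fun x ↦ hvy x⟩
  rw [show ⁅(w : s), (v : s)⁆ = 0 from congrArg Subtype.val (trivial_lie_zero u u w v), map_zero]

theorem coadjoint_tangent_ssubset_of_not_vanishes_on_abelian_ideal_general
    {K s : Type*} [Field K] [CharZero K] [LieRing s] [LieAlgebra K s]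
    (r : LieSubalgebra K s) [Module.Finite K r] [HasTrivialRadical K r]
    (u : LieIdeal K s) [Module.Finite K u] [IsLieAbelian u]
    (hinv : ∀ x ∈ u, (∀ y ∈ r, ⁅y, x⁆ = 0) → x = 0) (γ : Dual K s) (hγ : ∃ x ∈ u, γ x ≠ 0) :
    {f : Dual K s | ∃ x ∈ r, f = γ ∘ₗ (ad K s x : s →ₗ[K] s)}
      ⊂ {f : Dual K s | ∃ x : s, f = γ ∘ₗ (ad K s x : s →ₗ[K] s)} := by
  refine ⟨fun f ⟨x, _, hx⟩ ↦ ⟨x, hx⟩, fun hsub ↦ ?_⟩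
  have habs := absorbsTranslations_of_forall_exists_ad_eq (u := u) fun v _ ↦ hsub ⟨v, rfl⟩
  have hμ : γ ∘ₗ u.toSubmodule.subtype = 0 := habs.eq_zero fun v hv ↦
    Subtype.ext (hinv v v.2 fun y hy ↦ congrArg Subtype.val (hv ⟨y, hy⟩))
  obtain ⟨x, hx, hγx⟩ := hγ
  exact hγx (LinearMap.congr_fun hμ ⟨x, hx⟩)

end CoadjointTangent

/-- **Theorem 7, consequence (Brylinski–Kostant).** Let `𝕂` be `ℝ` or `ℂ` and let `s`
be a finite-dimensional Lie algebra over `𝕂` which is a semidirect sum `s = r + u`,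
where `u` is an abelian ideal, `r` is a semisimple Lie subalgebra with `r ⊓ u = 0`
and `r + u = s`, and the `r`-invariants in `u` vanish.  If `γ ∈ s*` does not vanish
identically on `u`, then `r·γ = {γ ∘ ad x : x ∈ r}` is a proper subset of
`s·γ = {γ ∘ ad x : x ∈ s}`: the subgroup corresponding to `r` cannot act
infinitesimally transitively at `γ` on the coadjoint orbit. -/
theorem coadjoint_tangent_ssubset_of_not_vanishes_on_abelian_ideal
    (𝕂 : Type*) [RCLike 𝕂]
    (s : Type*) [LieRing s] [LieAlgebra 𝕂 s] [Module.Finite 𝕂 s]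
    (r : LieSubalgebra 𝕂 s) (u : LieIdeal 𝕂 s)
    (hr : LieAlgebra.IsSemisimple 𝕂 r)
    (hu : IsLieAbelian u)
    (hinf : r.toSubmodule ⊓ LieSubmodule.toSubmodule u = ⊥)
    (hsup : r.toSubmodule ⊔ LieSubmodule.toSubmodule u = ⊤)
    (hinv : ∀ x ∈ u, (∀ y ∈ r, ⁅y, x⁆ = 0) → x = 0)
    (γ : Module.Dual 𝕂 s)
    (hγ : ∃ x ∈ u, γ x ≠ 0) :
    {f : Module.Dual 𝕂 s | ∃ x ∈ r, f = γ ∘ₗ (LieAlgebra.ad 𝕂 s x : s →ₗ[𝕂] s)}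
      ⊂ {f : Module.Dual 𝕂 s | ∃ x : s, f = γ ∘ₗ (LieAlgebra.ad 𝕂 s x : s →ₗ[𝕂] s)} := by
  exact coadjoint_tangent_ssubset_of_not_vanishes_on_abelian_ideal_general r u hinv γ hγ
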